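/- arXiv:1207.5747 — 2 statements merged into one kernel-verified Lean document; each statement's English description precedes it below -/
import Mathlib

section
/- If N > σ0, then there exists a unique p* ∈ (0, 1) with f(p*) = 0; moreover f(p) < 0 for p ∈ [0, p*) and f(p) > 0 for p ∈ (p*, 1]. (This p* is the competing probability of the unique symmetric mixed-action Nash equilibrium of the parking spot selection game.) -/
/-!
The number of opponents who compete is binomial, so the expected cost of competing is a polynomial
in Bernstein form whose coefficients `W 1, …, W N` are nondecreasing. The derivative of such a
polynomial is again in Bernstein form, with coefficients proportional to the increments of `W`,
so it is positive on `(0, 1)` as soon as the first and last coefficients differ. At the endpoints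
the polynomial takes the values `W 1` and `W N`; since `W k = max 1 (γ - (γ - 1) * R / k)` crosses
`β` exactly at `k = σ0`, these lie on either side of `β` when `1 < σ0 < N`.
-/

open Finset Polynomial

section BernsteinSum

/-- The polynomial of formal degree `n` whose coefficients in the Bernstein basis are
`w 0, …, w n`; it gives the expectation of `w` under a binomial law as a function of the success
probability. -/
noncomputable def bernsteinSum {R : Type*} [CommRing R] (n : ℕ) (w : ℕ → R) : R[X] :=
  ∑ k ∈ range (n + 1), C (w k) * bernsteinPolynomial R n k

namespace bernsteinSum

section CommRing

variable {R : Type*} [CommRing R] (n : ℕ) (w : ℕ → R)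

lemma eval_eq_sum (x : R) :
    (bernsteinSum n w).eval x =
      ∑ k ∈ range (n + 1), w k * n.choose k * x ^ k * (1 - x) ^ (n - k) := by
  simp [bernsteinSum, bernsteinPolynomial, eval_finsetSum, mul_assoc]

lemma eval_zero : (bernsteinSum n w).eval 0 = w 0 := by
  simp [bernsteinSum, eval_finsetSum, bernsteinPolynomial.eval_at_0]

lemma eval_one : (bernsteinSum n w).eval 1 = w n := by
  simp [bernsteinSum, eval_finsetSum, bernsteinPolynomial.eval_at_1]

lemma derivative_succ :
    derivative (bernsteinSum (n + 1) w) = (n + 1 : R[X]) * bernsteinSum n (fwdDiff 1 w) := by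
  have shift : ∑ k ∈ range (n + 1), C (w (k + 1)) * bernsteinPolynomial R n (k + 1) =
      ∑ k ∈ range (n + 1), C (w k) * bernsteinPolynomial R n k
        - C (w 0) * bernsteinPolynomial R n 0 := by
    rw [eq_sub_iff_add_eq, ← sum_range_succ' (fun k => C (w k) * bernsteinPolynomial R n k),
      sum_range_succ, bernsteinPolynomial.eq_zero_of_lt R n.lt_succ_self, mul_zero, add_zero]
  calc
    derivative (bernsteinSum (n + 1) w)
      = (n + 1 : R[X]) * (∑ k ∈ range (n + 1), C (w (k + 1)) * bernsteinPolynomial R n k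
          - ∑ k ∈ range (n + 1), C (w (k + 1)) * bernsteinPolynomial R n (k + 1)
          - C (w 0) * bernsteinPolynomial R n 0) := by
        simp only [bernsteinSum, sum_range_succ' _ (n + 1), derivative_add, derivative_sum,
          derivative_C_mul, bernsteinPolynomial.derivative_succ,
          bernsteinPolynomial.derivative_zero, Nat.add_sub_cancel, Nat.cast_succ,
          mul_left_comm (C _), ← mul_sum, mul_sub, sum_sub_distrib]
        ring
    _ = (n + 1 : R[X]) * bernsteinSum n (fwdDiff 1 w) := by
        rw [shift]
        simp only [bernsteinSum, fwdDiff, C_sub, sub_mul, sum_sub_distrib]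
        ring

end CommRing

lemma eval_pos {K : Type*} [Field K] [LinearOrder K] [IsStrictOrderedRing K] {n : ℕ} {w : ℕ → K}
    (hw : ∀ k ≤ n, 0 ≤ w k) (hpos : ∃ k ≤ n, 0 < w k) {x : K} (hx : x ∈ Set.Ioo 0 1) :
    0 < (bernsteinSum n w).eval x := by
  have hx0 : 0 < x := hx.1
  have hx1 : 0 < 1 - x := sub_pos.2 hx.2
  obtain ⟨j, hj, hwj⟩ := hpos
  rw [eval_eq_sum]
  refine sum_pos' (fun k hk => ?_) ⟨j, mem_range_succ_iff.2 hj, ?_⟩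
  · have := hw k (mem_range_succ_iff.1 hk)
    positivity
  · have := Nat.choose_pos hj
    positivity

lemma strictMonoOn_eval {n : ℕ} {w : ℕ → ℝ} (hw : MonotoneOn w (Set.Iic n)) (hlt : w 0 < w n) :
    StrictMonoOn (fun x => (bernsteinSum n w).eval x) (Set.Icc 0 1) := by
  obtain _ | n := n
  · exact absurd hlt (lt_irrefl _)
  have increment_nonneg : ∀ k ≤ n, 0 ≤ fwdDiff 1 w k := fun k hk =>
    sub_nonneg.2 <| hw (Set.mem_Iic.2 (by lia)) (Set.mem_Iic.2 (by lia)) k.le_succ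
  have increment_pos : ∃ k ≤ n, 0 < fwdDiff 1 w k := by
    by_contra! h
    have : w (n + 1) - w 0 ≤ 0 := by
      rw [← sum_range_sub]
      exact sum_nonpos fun k hk => h k (mem_range_succ_iff.1 hk)
    linarith
  refine strictMonoOn_of_deriv_pos (convex_Icc 0 1) (Polynomial.continuousOn _) fun x hx => ?_
  rw [interior_Icc] at hx
  have := eval_pos increment_nonneg increment_pos hx
  rw [Polynomial.deriv, derivative_succ, eval_mul, eval_add, eval_natCast, Polynomial.eval_one]
  positivity

end bernsteinSum

end BernsteinSum

lemma exists_crossing_of_strictMonoOn {α δ : Type*}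
    [ConditionallyCompleteLinearOrder α] [TopologicalSpace α] [OrderTopology α] [DenselyOrdered α]
    [LinearOrder δ] [TopologicalSpace δ] [OrderClosedTopology δ]
    {g : α → δ} {a b : α} {c : δ} (hab : a ≤ b) (hmono : StrictMonoOn g (Set.Icc a b))
    (hcont : ContinuousOn g (Set.Icc a b)) (ha : g a < c) (hb : c < g b) :
    ∃ x ∈ Set.Ioo a b, g x = c ∧ (∀ p ∈ Set.Ico a x, g p < c) ∧ (∀ p ∈ Set.Ioc x b, c < g p) ∧
      ∀ p ∈ Set.Ioo a b, g p = c → p = x := by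
  obtain ⟨x, hx, rfl⟩ := intermediate_value_Ioo hab hcont ⟨ha, hb⟩
  have hx' := Set.Ioo_subset_Icc_self hx
  exact ⟨x, hx, rfl, fun p hp => hmono ⟨hp.1, hp.2.le.trans hx'.2⟩ hx' hp.2,
    fun p hp => hmono hx' ⟨hx'.1.trans hp.1.le, hp.2⟩ hp.1,
    fun p hp => hmono.injOn (Set.Ioo_subset_Icc_self hp) hx'⟩

section ParkingGame

/-- The expected cost `W k` of competing when `k` drivers compete for `R` public spots: the public
cost `1` with probability `min 1 (R / k)` and `γ` otherwise. It is meant for `k ≥ 1` only, as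
`R / 0 = 0`. The number of spots may be any real number. -/
noncomputable def competingCost (R γ : ℝ) (k : ℕ) : ℝ :=
  min 1 (R / k) + (1 - min 1 (R / k)) * γ

/-- The paper's `σ0`: the (real) number of competing drivers at which competing costs exactly as
much as private parking. -/
noncomputable def indifferencePoint (R β γ : ℝ) : ℝ :=
  R * (γ - 1) / (γ - β)

/-- The paper's `f`: the expected cost of competing minus the private-parking cost `β`, when each of
the other `N - 1` drivers independently competes with probability `p`. -/
noncomputable def competingExcess (N : ℕ) (R β γ p : ℝ) : ℝ :=
  -β + ∑ k ∈ range N,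
    competingCost R γ (k + 1) * ((N - 1).choose k : ℝ) * p ^ k * (1 - p) ^ (N - 1 - k)

variable {N k : ℕ} {R β γ : ℝ}

lemma competingCost_eq_max (hγ : 1 ≤ γ) :
    competingCost R γ k = max 1 (γ - (γ - 1) * (R / k)) := by
  have : competingCost R γ k = γ - (γ - 1) * min 1 (R / k) := by
    rw [competingCost]
    ring
  rw [this, mul_min_of_nonneg _ _ (sub_nonneg.2 hγ), ← max_sub_sub_left, mul_one, sub_sub_cancel]

lemma monotone_competingCost_succ (hR : 0 ≤ R) (hγ : 1 ≤ γ) :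
    Monotone fun k => competingCost R γ (k + 1) := by
  intro j k hjk
  have := sub_nonneg.2 hγ
  simp only [competingCost_eq_max hγ]
  gcongr

lemma competingCost_lt_iff (hβ : 1 < β) (hβγ : β < γ) (hk : 0 < k) :
    competingCost R γ k < β ↔ k < indifferencePoint R β γ := by
  have hk' : (0 : ℝ) < k := Nat.cast_pos.2 hk
  rw [competingCost_eq_max (hβ.trans hβγ).le, max_lt_iff, and_iff_right hβ, indifferencePoint,
    sub_lt_comm, ← mul_div_assoc, lt_div_iff₀ hk', lt_div_iff₀ (sub_pos.2 hβγ), mul_comm R,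
    mul_comm (k : ℝ)]

lemma lt_competingCost_iff (hβ : 1 < β) (hβγ : β < γ) (hk : 0 < k) :
    β < competingCost R γ k ↔ indifferencePoint R β γ < k := by
  have hk' : (0 : ℝ) < k := Nat.cast_pos.2 hk
  rw [competingCost_eq_max (hβ.trans hβγ).le, lt_max_iff, or_iff_right hβ.not_gt,
    indifferencePoint, lt_sub_comm, ← mul_div_assoc, div_lt_iff₀ hk', div_lt_iff₀ (sub_pos.2 hβγ),
    mul_comm R, mul_comm (k : ℝ)]

lemma lt_indifferencePoint (hR : 0 < R) (hβ : 1 < β) (hβγ : β < γ) :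
    R < indifferencePoint R β γ := by
  rw [indifferencePoint, lt_div_iff₀ (sub_pos.2 hβγ)]
  gcongr

lemma pos_of_indifferencePoint_pos (hγ : 1 < γ) (hβγ : β < γ)
    (h : 0 < indifferencePoint R β γ) : 0 < R :=
  (mul_pos_iff_of_pos_right (sub_pos.2 hγ)).1 ((div_pos_iff_of_pos_right (sub_pos.2 hβγ)).1 h)

lemma competingExcess_succ_eq (n : ℕ) (R β γ : ℝ) :
    competingExcess (n + 1) R β γ =
      fun p => -β + (bernsteinSum n fun k => competingCost R γ (k + 1)).eval p := by
  funext p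
  rw [competingExcess, bernsteinSum.eval_eq_sum, Nat.add_sub_cancel]

theorem stmt_14_general (hβ : 1 < β) (hβγ : β < γ) (h_one : 1 < indifferencePoint R β γ)
    (hN : indifferencePoint R β γ < N) :
    ∃ pstar ∈ Set.Ioo (0 : ℝ) 1, competingExcess N R β γ pstar = 0 ∧
      (∀ p ∈ Set.Ico (0 : ℝ) pstar, competingExcess N R β γ p < 0) ∧
      (∀ p ∈ Set.Ioc pstar (1 : ℝ), 0 < competingExcess N R β γ p) ∧
      ∀ p ∈ Set.Ioo (0 : ℝ) 1, competingExcess N R β γ p = 0 → p = pstar := by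
  obtain ⟨n, rfl⟩ : ∃ n, N = n + 1 :=
    Nat.exists_eq_add_one.2 (Nat.cast_pos.1 (one_pos.trans (h_one.trans hN)))
  have hR : 0 < R := pos_of_indifferencePoint_pos (hβ.trans hβγ) hβγ (one_pos.trans h_one)
  have cost_mono := monotone_competingCost_succ hR.le (hβ.trans hβγ).le
  have cost_one : competingCost R γ (0 + 1) < β :=
    (competingCost_lt_iff hβ hβγ one_pos).2 (by simpa using h_one)
  have cost_N : β < competingCost R γ (n + 1) := (lt_competingCost_iff hβ hβγ n.succ_pos).2 hN
  rw [competingExcess_succ_eq]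
  refine exists_crossing_of_strictMonoOn zero_le_one ?_ (by fun_prop) ?_ ?_
  · exact (bernsteinSum.strictMonoOn_eval (cost_mono.monotoneOn _)
      (cost_one.trans cost_N)).const_add (-β)
  · simpa only [bernsteinSum.eval_zero, neg_add_lt_iff_lt_add, add_zero] using cost_one
  · simpa only [bernsteinSum.eval_one, lt_neg_add_iff_add_lt, add_zero] using cost_N

end ParkingGame

/-- If N > σ0, then there exists a unique p* ∈ (0,1) with f(p*) = 0;
moreover f(p) < 0 for p ∈ [0, p*) and f(p) > 0 for p ∈ (p*, 1]. -/
theorem stmt_14 (N R : ℕ) (hN : 1 < N) (hR : 1 ≤ R)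
    (β γ δ σ0 : ℝ) (hβ : 1 < β) (hβγ : β < γ)
    (hδ : δ = γ - β) (hσ0 : σ0 = R * (γ - 1) / δ)
    (W : ℕ → ℝ)
    (hW : ∀ k : ℕ, W k = min 1 ((R : ℝ) / (k : ℝ)) + (1 - min 1 ((R : ℝ) / (k : ℝ))) * γ)
    (f : ℝ → ℝ)
    (hf : ∀ p : ℝ, f p = -β + ∑ k ∈ Finset.range N,
      W (k + 1) * ((N - 1).choose k : ℝ) * p ^ k * (1 - p) ^ (N - 1 - k))
    (hlt : σ0 < (N : ℝ)) :
    ∃ pstar : ℝ, pstar ∈ Set.Ioo (0 : ℝ) 1 ∧ f pstar = 0 ∧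
      (∀ p ∈ Set.Ico (0 : ℝ) pstar, f p < 0) ∧
      (∀ p ∈ Set.Ioc pstar (1 : ℝ), 0 < f p) ∧
      (∀ p ∈ Set.Ioo (0 : ℝ) 1, f p = 0 → p = pstar) := by
  obtain rfl : W = competingCost R γ := funext hW
  obtain rfl : f = competingExcess N R β γ := funext hf
  subst hδ hσ0
  have hR' : (1 : ℝ) ≤ R := Nat.one_le_cast.2 hR
  exact stmt_14_general hβ hβγ (hR'.trans_lt (lt_indifferencePoint (by positivity) hβ hβγ)) hlt
end

section
/- If N > R and the activity probability satisfies q ∈ (0, 1], then the function h is strictly increasing on the interval [0, 1]. -/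
/-!
If the number of active drivers among the other `N - 1` is binomial with parameter `q` and each of
them competes with probability `p`, then the number of competitors is binomial with parameter
`q * p`. Hence `h p + β` is the value at `q * p` of the Bernstein form of degree `N - 1` with
coefficients `W 1, …, W N`. The derivative of a Bernstein form is, up to a positive factor, the
Bernstein form of the differences of its coefficients; as `W` increases and `W 1 < W N`, it is
positive on `(0, 1)`.
-/

section BernsteinForm

open Polynomial Finset

variable {A : Type*} [CommRing A]

/-- The polynomial of degree at most `n` with coefficients `f 0, …, f n` in the Bernstein basis.
Its value at `x` is the mean of `f` under the binomial distribution with parameters `n` and `x`.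
The values of `f` beyond `n` are irrelevant. -/
noncomputable def bernsteinForm (n : ℕ) (f : ℕ → A) : A[X] :=
  ∑ k ∈ range (n + 1), C (f k) * bernsteinPolynomial A n k

theorem eval_bernsteinPolynomial (n k : ℕ) (x : A) :
    (bernsteinPolynomial A n k).eval x = n.choose k * x ^ k * (1 - x) ^ (n - k) := by
  simp [bernsteinPolynomial]

theorem eval_bernsteinForm (n : ℕ) (f : ℕ → A) (x : A) :
    (bernsteinForm n f).eval x =
      ∑ k ∈ range (n + 1), f k * (bernsteinPolynomial A n k).eval x := by
  simp [bernsteinForm, eval_finsetSum]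

theorem derivative_bernsteinForm_succ (n : ℕ) (f : ℕ → A) :
    derivative (bernsteinForm (n + 1) f) = (n + 1) * bernsteinForm n (fwdDiff 1 f) := by
  have shift : ∑ k ∈ range (n + 1), C (f (k + 1)) * bernsteinPolynomial A n (k + 1) +
      C (f 0) * bernsteinPolynomial A n 0 = bernsteinForm n f := by
    rw [← sum_range_succ' (fun k => C (f k) * bernsteinPolynomial A n k), sum_range_succ,
      bernsteinPolynomial.eq_zero_of_lt A n.lt_succ_self, mul_zero, add_zero, bernsteinForm]
  calc derivative (bernsteinForm (n + 1) f)
      = (n + 1) * (∑ k ∈ range (n + 1), C (f (k + 1)) * bernsteinPolynomial A n k -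
          (∑ k ∈ range (n + 1), C (f (k + 1)) * bernsteinPolynomial A n (k + 1) +
            C (f 0) * bernsteinPolynomial A n 0)) := by
        rw [bernsteinForm, sum_range_succ', derivative_add, derivative_sum, ← sub_sub,
          ← sum_sub_distrib, mul_sub, mul_sum]
        simp only [derivative_C_mul, bernsteinPolynomial.derivative_succ,
          bernsteinPolynomial.derivative_zero, Nat.add_sub_cancel, Nat.cast_add, Nat.cast_one]
        rw [sub_eq_add_neg]
        congr 1
        · exact sum_congr rfl fun k _ => by ring
        · ring
    _ = (n + 1) * bernsteinForm n (fwdDiff 1 f) := by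
        simp only [shift, bernsteinForm, fwdDiff, C_sub, sub_mul, sum_sub_distrib]

theorem sum_eval_bernsteinPolynomial_mul {m k : ℕ} (hk : k ≤ m) (x y : A) :
    ∑ n ∈ Icc k m, (bernsteinPolynomial A m n).eval x * (bernsteinPolynomial A n k).eval y =
      (bernsteinPolynomial A m k).eval (x * y) := by
  obtain ⟨d, rfl⟩ := Nat.exists_eq_add_of_le hk
  have binomial : (1 - x * y) ^ d =
      ∑ j ∈ range (d + 1), (x * (1 - y)) ^ j * (1 - x) ^ (d - j) * d.choose j := by
    rw [← add_pow]
    ring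
  rw [← Ico_add_one_right_eq_Icc, sum_Ico_eq_sum_range, add_assoc, Nat.add_sub_cancel_left]
  simp only [eval_bernsteinPolynomial, Nat.add_sub_cancel_left, binomial, mul_sum, mul_pow]
  refine sum_congr rfl fun j _ => ?_
  have choose_mul_choose : ((k + d).choose (k + j) * (k + j).choose k : A) =
      (k + d).choose k * d.choose j := by
    have := Nat.choose_mul (n := k + d) (Nat.le_add_right k j)
    rw [Nat.add_sub_cancel_left, Nat.add_sub_cancel_left] at this
    exact_mod_cast congrArg (Nat.cast : ℕ → A) this
  rw [Nat.add_sub_add_left]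
  linear_combination
    x ^ (k + j) * (1 - x) ^ (d - j) * y ^ k * (1 - y) ^ j * choose_mul_choose

theorem eval_bernsteinForm_eval_bernsteinForm (m : ℕ) (f : ℕ → A) (x y : A) :
    (bernsteinForm m fun n => (bernsteinForm n f).eval y).eval x =
      (bernsteinForm m f).eval (x * y) := by
  simp only [eval_bernsteinForm, sum_mul]
  rw [sum_comm' (t' := range (m + 1)) (s' := fun k => Icc k m)
    (by simp only [mem_range, mem_Icc]; lia)]
  refine sum_congr rfl fun k hk => ?_
  rw [← sum_eval_bernsteinPolynomial_mul (mem_range_succ_iff.mp hk), mul_sum]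
  exact sum_congr rfl fun n _ => by ring

theorem eval_bernsteinPolynomial_pos [LinearOrder A] [IsStrictOrderedRing A] {n k : ℕ}
    (hk : k ≤ n) {x : A} (hx : x ∈ Set.Ioo 0 1) : 0 < (bernsteinPolynomial A n k).eval x := by
  have hx₀ : 0 < x := hx.1
  have hx₁ : 0 < 1 - x := sub_pos.mpr hx.2
  have choose_pos : (0 : A) < n.choose k := Nat.cast_pos.mpr (Nat.choose_pos hk)
  rw [eval_bernsteinPolynomial]
  positivity

theorem eval_bernsteinForm_pos [LinearOrder A] [IsStrictOrderedRing A] {n : ℕ} {f : ℕ → A}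
    (hf : ∀ k ≤ n, 0 ≤ f k) (hpos : ∃ k ≤ n, 0 < f k) {x : A} (hx : x ∈ Set.Ioo 0 1) :
    0 < (bernsteinForm n f).eval x := by
  obtain ⟨k, hk, hfk⟩ := hpos
  rw [eval_bernsteinForm]
  refine sum_pos' (fun i hi => ?_) ⟨k, mem_range_succ_iff.mpr hk, ?_⟩
  · have hi : i ≤ n := mem_range_succ_iff.mp hi
    exact mul_nonneg (hf i hi) (eval_bernsteinPolynomial_pos hi hx).le
  · exact mul_pos hfk (eval_bernsteinPolynomial_pos hk hx)

theorem strictMonoOn_eval_bernsteinForm {n : ℕ} {f : ℕ → ℝ} (hf : MonotoneOn f (Set.Iic n))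
    (hlt : f 0 < f n) : StrictMonoOn (fun x => (bernsteinForm n f).eval x) (Set.Icc 0 1) := by
  obtain _ | n := n
  · exact absurd hlt (lt_irrefl _)
  have diff_nonneg : ∀ k ≤ n, 0 ≤ fwdDiff 1 f k := fun k hk =>
    sub_nonneg.mpr (hf (Set.mem_Iic.mpr (by lia)) (Set.mem_Iic.mpr (by lia)) k.le_succ)
  have exists_diff_pos : ∃ k ≤ n, 0 < fwdDiff 1 f k := by
    have sum_diff_pos : ∑ k ∈ range (n + 1), 0 < ∑ k ∈ range (n + 1), fwdDiff 1 f k := by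
      simpa only [fwdDiff, sum_const_zero, sum_range_sub, sub_pos] using hlt
    simpa only [mem_range_succ_iff] using exists_lt_of_sum_lt sum_diff_pos
  refine strictMonoOn_of_deriv_pos (convex_Icc 0 1) (Polynomial.continuousOn _) fun x hx => ?_
  rw [interior_Icc] at hx
  have eval_pos := eval_bernsteinForm_pos diff_nonneg exists_diff_pos hx
  rw [Polynomial.deriv, derivative_bernsteinForm_succ, eval_mul]
  simp only [eval_add, eval_natCast, eval_one]
  positivity

end BernsteinForm

section CompetitionCost

/-- The expected cost `W k` of competing when `k` drivers compete for `R` public spots: a public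
spot costs `1` and the failure to find one costs `γ`. Division by zero makes `W 0 = γ`, so the
formula is meaningful for `1 ≤ k` only. -/
noncomputable def competitionCost (R γ : ℝ) (k : ℕ) : ℝ :=
  min 1 (R / k) + (1 - min 1 (R / k)) * γ

variable {R γ : ℝ}

theorem competitionCost_eq (R γ : ℝ) (k : ℕ) :
    competitionCost R γ k = γ - (γ - 1) * min 1 (R / k) := by
  rw [competitionCost]
  ring

theorem monotoneOn_competitionCost (hR : 0 ≤ R) (hγ : 1 ≤ γ) :
    MonotoneOn (competitionCost R γ) (Set.Ici 1) := by
  intro j (hj : 1 ≤ j) k _ hjk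
  have : 0 ≤ γ - 1 := sub_nonneg.mpr hγ
  simp only [competitionCost_eq]
  gcongr

theorem competitionCost_lt_competitionCost (hR : 0 < R) (hγ : 1 < γ) {j k : ℕ} (hj : 0 < j)
    (hjk : j < k) (hRk : R < k) : competitionCost R γ j < competitionCost R γ k := by
  have ratio_lt_one : R / k < 1 := (div_lt_one (hR.trans hRk)).mpr hRk
  have ratio_lt_ratio : R / k < R / j := by gcongr
  have : 0 < γ - 1 := sub_pos.mpr hγ
  simp only [competitionCost_eq]
  gcongr γ - (γ - 1) * ?_
  exact min_lt_of_right_lt (lt_min ratio_lt_one ratio_lt_ratio)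

end CompetitionCost

theorem stmt_16_general {N : ℕ} (hN : 1 < N) {R : ℝ} (hR : 0 < R) (hRN : R < N) (β : ℝ) {γ : ℝ}
    (hγ : 1 < γ) {q : ℝ} (hq : q ∈ Set.Ioc (0 : ℝ) 1) :
    StrictMonoOn (fun p : ℝ => -β + ∑ n ∈ Finset.range N,
      ((N - 1).choose n : ℝ) * q ^ n * (1 - q) ^ (N - 1 - n) *
        ∑ k ∈ Finset.range (n + 1),
          competitionCost R γ (k + 1) * (n.choose k : ℝ) * p ^ k * (1 - p) ^ (n - k))
      (Set.Icc 0 1) := by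
  obtain ⟨m, rfl⟩ := Nat.exists_eq_add_of_le' hN.le
  have form_strictMono : StrictMonoOn
      (fun x => (bernsteinForm m fun k => competitionCost R γ (k + 1)).eval x) (Set.Icc 0 1) :=
    strictMonoOn_eval_bernsteinForm
      (fun j _ k _ hjk => monotoneOn_competitionCost hR.le hγ.le (Set.mem_Ici.mpr (by lia))
        (Set.mem_Ici.mpr (by lia)) (by lia))
      (competitionCost_lt_competitionCost hR hγ one_pos hN hRN)
  have mul_strictMono : StrictMonoOn (q * ·) (Set.Icc 0 1) :=
    (strictMono_mul_left_of_pos hq.1).strictMonoOn _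
  have mul_mapsTo : Set.MapsTo (q * ·) (Set.Icc 0 1) (Set.Icc 0 1) := fun p hp =>
    unitInterval.mul_mem ⟨hq.1.le, hq.2⟩ hp
  refine ((form_strictMono.comp mul_strictMono mul_mapsTo).const_add (-β)).congr fun p _ => ?_
  simp only [Function.comp_apply]
  rw [← eval_bernsteinForm_eval_bernsteinForm]
  simp only [eval_bernsteinForm, eval_bernsteinPolynomial, Nat.add_sub_cancel, ← mul_assoc]
  simp only [mul_comm (Finset.sum _ _), mul_assoc]

/-- If N > R and the activity probability q ∈ (0,1], then h is strictly
increasing on [0, 1]. -/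
theorem stmt_16 (N R : ℕ) (hN : 1 < N) (hR : 1 ≤ R)
    (β γ : ℝ) (hβ : 1 < β) (hβγ : β < γ)
    (W : ℕ → ℝ)
    (hW : ∀ k : ℕ, W k = min 1 ((R : ℝ) / (k : ℝ)) + (1 - min 1 ((R : ℝ) / (k : ℝ))) * γ)
    (q : ℝ) (hq : q ∈ Set.Ioc (0 : ℝ) 1)
    (h : ℝ → ℝ)
    (hh : ∀ p : ℝ, h p = -β + ∑ n ∈ Finset.range N,
      ((N - 1).choose n : ℝ) * q ^ n * (1 - q) ^ (N - 1 - n) *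
        ∑ k ∈ Finset.range (n + 1),
          W (k + 1) * (n.choose k : ℝ) * p ^ k * (1 - p) ^ (n - k))
    (hRN : R < N) :
    StrictMonoOn h (Set.Icc 0 1) := by
  obtain rfl : W = competitionCost R γ := funext hW
  obtain rfl := funext hh
  exact stmt_16_general hN (by exact_mod_cast hR) (by exact_mod_cast hRN) β (hβ.trans hβγ) hq
end
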